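/- arXiv:2106.13053 — 2 statements merged into one kernel-verified Lean document; each statement's English description precedes it below -/
import Mathlib

section
/- Given a countable family {X_n : n ∈ ℕ} of subsets of [0,1]∩ℚ, there exist a point x ∈ [0,1] and an infinite set X ⊆ [0,1]∩ℚ converging to x such that for every n, either X ∩ X_n or X \ X_n is finite, and moreover X meets B(x,α_k) \ B(x,α_{k+1}) for all sufficiently large k, for any prescribed strictly decreasing null sequence (α_n) in (0,1/2]. -/
open Filter Topology Set

/-- The upper-density submeasure `φ(A) = sup_n |A ∩ [0,n]| / (n+1)`. -/
noncomputable def phi (A : Set ℕ) : ℝ :=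
  ⨆ n : ℕ, ((A ∩ Set.Iic n).ncard : ℝ) / (n + 1)

/-- The ideal of asymptotic density zero sets. -/
def densityZero : Set (Set ℕ) :=
  {A | Tendsto (fun n : ℕ => ((A ∩ Set.Iic n).ncard : ℝ) / (n + 1)) atTop (𝓝 0)}

/-- `I` is an ideal on `X` (containing all finite sets, proper). -/
def IsIdeal {X : Type*} (I : Set (Set X)) : Prop :=
  (∀ A ∈ I, ∀ B, B ⊆ A → B ∈ I) ∧ (∀ A ∈ I, ∀ B ∈ I, A ∪ B ∈ I) ∧
    (∀ A : Set X, A.Finite → A ∈ I) ∧ Set.univ ∉ I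

/-- `J` is a P⁺-ideal. -/
def IsPPlus {X : Type*} (J : Set (Set X)) : Prop :=
  ∀ A : ℕ → Set X, (∀ n, A (n + 1) ⊆ A n) → (∀ n, A n ∉ J) →
    ∃ B ∉ J, ∀ n, (B \ A n).Finite

/-- Katětov order. -/
def KatLE {X Y : Type*} (I : Set (Set X)) (J : Set (Set Y)) : Prop :=
  ∃ f : Y → X, ∀ A ∈ I, f ⁻¹' A ∈ J

/-- membership in the class `S` of strictly decreasing null sequences in `(0,1/2]`. -/
def memS (α : ℕ → ℝ) : Prop :=
  (∀ n, 0 < α n) ∧ (∀ n, α n ≤ 1 / 2) ∧ StrictAnti α ∧ Tendsto α atTop (𝓝 0)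

/-- The underlying countable set `[0,1] ∩ ℚ`. -/
abbrev Q01 : Type := ↥(Set.Icc (0 : ℚ) 1)

/-- The real number corresponding to a point of `[0,1] ∩ ℚ`. -/
noncomputable def qr (q : Q01) : ℝ := ((q : ℚ) : ℝ)

/-- The set `S ⊆ [0,1]∩ℚ` converges to `x ∈ ℝ`. -/
def ConvTo (S : Set Q01) (x : ℝ) : Prop :=
  ∀ ε > (0 : ℝ), {q ∈ S | ε ≤ |qr q - x|}.Finite

/-- `S` converges `I`-quickly with respect to `α` to the point `x`. -/
def IQuickTo (I : Set (Set ℕ)) (α : ℕ → ℝ) (S : Set Q01) (x : ℝ) : Prop :=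
  ConvTo S x ∧
    {n : ℕ | ∃ q ∈ S, α (n + 1) ≤ |qr q - x| ∧ |qr q - x| < α n} ∈ I

/-- `S` converges `I`-quickly with respect to `α`. -/
def IQuick (I : Set (Set ℕ)) (α : ℕ → ℝ) (S : Set Q01) : Prop :=
  ∃ x ∈ Set.Icc (0 : ℝ) 1, IQuickTo I α S x

/-- The ideal `conv(I,(α_n))` on `[0,1] ∩ ℚ`. -/
def convQI (I : Set (Set ℕ)) (α : ℕ → ℝ) : Set (Set Q01) :=
  {A | ∃ F : Finset (Set Q01), (∀ S ∈ F, IQuick I α S) ∧ A ⊆ ⋃₀ ↑F}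

/-- The ideal `conv` on `[0,1] ∩ ℚ` generated by convergent sequences. -/
def convIdeal : Set (Set Q01) :=
  {A | ∃ F : Finset (Set Q01),
    (∀ S ∈ F, ∃ x ∈ Set.Icc (0 : ℝ) 1, ConvTo S x) ∧ A ⊆ ⋃₀ ↑F}

/-- Identify a point of Cantor space `2^X` with a subset of `X`. -/
def toSet {X : Type*} (f : X → Bool) : Set X := {x | f x = true}

/-- `Σ⁰ₙ` sets of a topological space: `IsSigma0 1 = open`,
`IsSigma0 (n+1)` = countable unions of complements of `Σ⁰ₙ` sets. -/
def IsSigma0 {X : Type*} [TopologicalSpace X] : ℕ → Set X → Prop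
  | 0, _ => False
  | 1, S => IsOpen S
  | (n + 2), S => ∃ f : ℕ → Set X, (∀ k, IsSigma0 (n + 1) (f k)ᶜ) ∧ S = ⋃ k, f k

/-! Instead of nesting intervals, pick the limit point generically. Let `𝒜` be the countable algebra
of sets generated by the `X n`. By the Baire category theorem some point `x` avoids, for every
`C ∈ 𝒜`, the frontier of the closure of the image of `C`; so as soon as `x` lies in that closure,
the image of `C` is dense near `x`. This applies to the members of `𝒜` that belong to an ultrafilter
converging to `x`, and they generate a countably generated filter deciding every `X n`. The image of
each set of this filter is dense near `x`, hence meets every small annulus around `x`, and a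
diagonal choice of one point per annulus produces the required set. -/

theorem exists_mem_subset_of_mem_generate {ι : Type*} {𝒢 : Set (Set ι)} (h𝒢 : FiniteInter 𝒢)
    {S : Set ι} (hS : S ∈ generate 𝒢) : ∃ C ∈ 𝒢, C ⊆ S := by
  obtain ⟨𝒯, h𝒯, hfin, hsub⟩ := mem_generate_iff.1 hS
  obtain ⟨𝒯, rfl⟩ := hfin.exists_finset_coe
  exact ⟨_, h𝒢.finiteInter_mem 𝒯 h𝒯, hsub⟩

section Baire

variable {ι E : Type*} [TopologicalSpace E] [BaireSpace E]

theorem dense_setOf_mem_closure_imp_closure_mem_nhds {κ : Type*} [Countable κ] (T : κ → Set E) :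
    Dense {x | ∀ i, x ∈ closure (T i) → closure (T i) ∈ 𝓝 x} := by
  have hdense : Dense (⋂ i, (frontier (closure (T i)))ᶜ) :=
    dense_iInter_of_isOpen (fun _ => isClosed_frontier.isOpen_compl) fun _ =>
      interior_eq_empty_iff_dense_compl.1 (interior_frontier isClosed_closure)
  refine hdense.mono fun x hx i hxi => mem_interior_iff_mem_nhds.1 ?_
  by_contra hint
  exact mem_iInter.1 hx i ⟨subset_closure hxi, hint⟩

theorem exists_filter_deciding_of_denseRange [Nonempty E] {κ : Type*} [Countable κ] {f : ι → E}
    (hf : DenseRange f) (X : κ → Set ι) :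
    ∃ (x : E) (F : Filter ι), F.IsCountablyGenerated ∧ (∀ i, X i ∈ F ∨ (X i)ᶜ ∈ F) ∧
      ∀ S ∈ F, closure (f '' S) ∈ 𝓝 x := by
  let 𝒜 := MeasureTheory.generateSetAlgebra (range X)
  have hX : ∀ i, X i ∈ 𝒜 := fun i =>
    MeasureTheory.self_subset_generateSetAlgebra (mem_range_self i)
  have h𝒜 : MeasureTheory.IsSetAlgebra 𝒜 := MeasureTheory.isSetAlgebra_generateSetAlgebra
  have hcount : 𝒜.Countable := MeasureTheory.countable_generateSetAlgebra (countable_range X)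
  have : Countable 𝒜 := hcount.to_subtype
  obtain ⟨x, hx⟩ := (dense_setOf_mem_closure_imp_closure_mem_nhds fun C : 𝒜 => f '' C).nonempty
  have : (comap f (𝓝 x)).NeBot :=
    comap_neBot_iff_frequently.2 (mem_closure_iff_frequently.1 (hf x))
  obtain ⟨𝒰, h𝒰⟩ := Ultrafilter.exists_le (comap f (𝓝 x))
  have hmeet : ∀ C ∈ 𝒰, x ∈ closure (f '' C) := fun C hC =>
    mem_closure_of_tendsto (tendsto_iff_comap.2 h𝒰) (mem_of_superset hC fun _ => mem_image_of_mem f)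
  have hinter : FiniteInter {C | C ∈ 𝒜 ∧ C ∈ 𝒰} :=
    ⟨⟨h𝒜.univ_mem, univ_mem⟩, fun _ hC _ hD => ⟨h𝒜.inter_mem hC.1 hD.1, inter_mem hC.2 hD.2⟩⟩
  refine ⟨x, generate {C | C ∈ 𝒜 ∧ C ∈ 𝒰}, ⟨_, hcount.mono fun _ => And.left, rfl⟩,
    fun i => ?_, fun S hS => ?_⟩
  · exact (𝒰.mem_or_compl_mem (X i)).imp (fun h => mem_generate_of_mem ⟨hX i, h⟩)
      fun h => mem_generate_of_mem ⟨h𝒜.compl_mem (hX i), h⟩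
  · obtain ⟨C, ⟨hC𝒜, hC𝒰⟩, hCS⟩ := exists_mem_subset_of_mem_generate hinter hS
    exact mem_of_superset (hx ⟨C, hC𝒜⟩ (hmeet C hC𝒰)) (closure_mono (image_mono hCS))

end Baire

theorem exists_tendsto_atTop_eventually_mem {ι : Type*} {F : Filter ι} [F.IsCountablyGenerated]
    {W : ℕ → Set ι} (hW : ∀ S ∈ F, ∀ᶠ k in atTop, (S ∩ W k).Nonempty) :
    ∃ q : ℕ → ι, Tendsto q atTop F ∧ ∀ᶠ k in atTop, q k ∈ W k := by
  classical
  obtain ⟨B, hB⟩ := F.exists_antitone_basis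
  have hBW : ∀ n, ∀ᶠ k in atTop, (B n ∩ W k).Nonempty := fun n => hW _ (hB.mem n)
  have : Nonempty ι := (hBW 0).exists.elim fun _ h => h.to_type
  -- `B (depth k)` is the smallest of `B 0, …, B k` that meets `W k`.
  let depth : ℕ → ℕ := fun k => Nat.findGreatest (fun n => (B n ∩ W k).Nonempty) k
  have hdepth : ∀ {n k}, n ≤ k → (B n ∩ W k).Nonempty → (B (depth k) ∩ W k).Nonempty :=
    fun hnk h => Nat.findGreatest_spec (P := fun n => (B n ∩ W _).Nonempty) hnk h
  have hchoice : ∀ k, (B (depth k) ∩ W k).Nonempty → ∃ p, p ∈ B (depth k) ∩ W k := fun _ h => h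
  choose! q hq using hchoice
  refine ⟨q, hB.tendsto_right_iff.2 fun n _ => ?_, (hBW 0).mono fun k hk => ?_⟩
  · filter_upwards [hBW n, eventually_ge_atTop n] with k hk hnk
    exact hB.antitone (Nat.le_findGreatest hnk hk) (hq k (hdepth hnk hk)).1
  · exact (hq k (hdepth k.zero_le hk)).2

theorem finite_range_inter_of_eventually_notMem {β : Type*} {q : ℕ → β} {A : Set β}
    (h : ∀ᶠ k in atTop, q k ∉ A) : (range q ∩ A).Finite := by
  have hfin : {k | q k ∈ A}.Finite := by
    simpa only [← Nat.cofinite_eq_atTop, eventually_cofinite, not_not] using h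
  rw [← image_preimage_eq_range_inter]
  exact hfin.image q

theorem infinite_range_of_tendsto_nhdsNE {β E : Type*} [TopologicalSpace E] [T1Space E] {x : E}
    {l : Filter β} [l.NeBot] {g : β → E} (h : Tendsto g l (𝓝[≠] x)) : (range g).Infinite :=
  Infinite.of_accPt <|
    (tendsto_inf.2 ⟨h, tendsto_principal.2 (.of_forall mem_range_self)⟩).neBot

section Annuli

variable {E : Type*}

theorem exists_dist_mem_Ioo [PseudoMetricSpace E] [PreconnectedSpace E] {x y : E} {r s : ℝ}
    (hr : 0 ≤ r) (hrs : r < s) (hs : s ≤ dist y x) : ∃ z, dist z x ∈ Ioo r s := by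
  obtain ⟨t, hrt, hts⟩ := exists_between hrs
  obtain ⟨z, rfl⟩ : t ∈ range fun z => dist z x :=
    mem_range_of_exists_le_of_exists_ge (by fun_prop)
      ⟨x, (dist_self x).trans_le (hr.trans hrt.le)⟩ ⟨y, hts.le.trans hs⟩
  exact ⟨z, hrt, hts⟩

theorem eventually_exists_mem_dist_mem_Ioo [MetricSpace E] [PreconnectedSpace E] [Nontrivial E]
    {x : E} {T : Set E} (hT : closure T ∈ 𝓝 x) {α : ℕ → ℝ} (hα : StrictAnti α)
    (hlim : Tendsto α atTop (𝓝 0)) :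
    ∀ᶠ k in atTop, ∃ z ∈ T, dist z x ∈ Ioo (α (k + 1)) (α k) := by
  obtain ⟨ε, hε, hball⟩ := Metric.mem_nhds_iff.1 hT
  obtain ⟨y, hy⟩ := exists_ne x
  filter_upwards [hlim.eventually_le_const hε, hlim.eventually_le_const (dist_pos.2 hy)]
    with k hkε hky
  obtain ⟨w, hw⟩ := exists_dist_mem_Ioo (hα.antitone.le_of_tendsto hlim (k + 1))
    (hα k.lt_succ_self) hky
  have hopen : IsOpen {z | dist z x ∈ Ioo (α (k + 1)) (α k)} :=
    isOpen_Ioo.preimage (continuous_id.dist continuous_const)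
  obtain ⟨z, hz, hzT⟩ := mem_closure_iff.1 (hball (hw.2.trans_le hkε)) _ hopen hw
  exact ⟨z, hzT, hz⟩

end Annuli

theorem fusion_construction_general {ι E : Type*} [MetricSpace E] [BaireSpace E] [ConnectedSpace E]
    [Nontrivial E] {κ : Type*} [Countable κ] {f : ι → E} (hf : DenseRange f) (X : κ → Set ι)
    {α : ℕ → ℝ} (hα : StrictAnti α) (hlim : Tendsto α atTop (𝓝 0)) :
    ∃ (x : E) (Y : Set ι), Y.Infinite ∧ (∀ ε > 0, {p ∈ Y | ε ≤ dist (f p) x}.Finite) ∧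
      (∀ i, (Y ∩ X i).Finite ∨ (Y \ X i).Finite) ∧
      ∃ k₀ : ℕ, ∀ k ≥ k₀, ∃ p ∈ Y, α (k + 1) ≤ dist (f p) x ∧ dist (f p) x < α k := by
  obtain ⟨x, F, hF, hdec, hdense⟩ := exists_filter_deciding_of_denseRange hf X
  obtain ⟨q, hqF, hq⟩ : ∃ q : ℕ → ι, Tendsto q atTop F ∧
      ∀ᶠ k in atTop, dist (f (q k)) x ∈ Ioo (α (k + 1)) (α k) :=
    exists_tendsto_atTop_eventually_mem fun S hS =>
      (eventually_exists_mem_dist_mem_Ioo (hdense S hS) hα hlim).mono fun _ ⟨_, ⟨p, hp, rfl⟩, hz⟩ =>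
        ⟨p, hp, hz⟩
  have hqx : Tendsto (f ∘ q) atTop (𝓝[≠] x) := by
    refine tendsto_nhdsWithin_iff.2 ⟨tendsto_iff_dist_tendsto_zero.2 ?_, ?_⟩
    · exact squeeze_zero' (.of_forall fun _ => dist_nonneg) (hq.mono fun _ h => h.2.le) hlim
    · exact hq.mono fun k h => dist_pos.1 ((hα.antitone.le_of_tendsto hlim (k + 1)).trans_lt h.1)
  refine ⟨x, range q, ?_, fun ε hε => ?_, fun i => ?_, ?_⟩
  · exact .of_image f (range_comp f q ▸ infinite_range_of_tendsto_nhdsNE hqx)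
  · have hnear : ∀ᶠ k in atTop, dist (f (q k)) x < ε :=
      (hqx.mono_right nhdsWithin_le_nhds).eventually_mem (Metric.ball_mem_nhds x hε)
    exact finite_range_inter_of_eventually_notMem (hnear.mono fun _ => not_le.2)
  · exact (hdec i).symm.imp
      (fun h => finite_range_inter_of_eventually_notMem (hqF.eventually_mem h))
      fun h => finite_range_inter_of_eventually_notMem
        ((hqF.eventually_mem h).mono fun _ => not_not.2)
  · obtain ⟨k₀, hk₀⟩ := eventually_atTop.1 hq
    exact ⟨k₀, fun k hk => ⟨q k, mem_range_self k, (hk₀ k hk).1.le, (hk₀ k hk).2⟩⟩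

theorem qr_mem_unitInterval (q : Q01) : qr q ∈ unitInterval := by
  simpa only [qr, Rat.cast_nonneg, ← Rat.cast_one (α := ℝ), Rat.cast_le, mem_Icc] using q.2

/-- The inclusion of `[0,1] ∩ ℚ` into the real unit interval, that is `qr` with its bounds: it makes
`[0,1] ∩ ℚ` a dense subset of a complete connected space. -/
noncomputable def toUnitInterval (q : Q01) : unitInterval :=
  ⟨qr q, qr_mem_unitInterval q⟩

theorem denseRange_toUnitInterval : DenseRange toUnitInterval := by
  refine dense_of_exists_between fun a b hab => ?_
  obtain ⟨r, har, hrb⟩ := exists_rat_btwn (Subtype.coe_lt_coe.2 hab)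
  have hr0 : 0 ≤ r := mod_cast a.2.1.trans har.le
  have hr1 : r ≤ 1 := mod_cast hrb.le.trans b.2.2
  exact ⟨toUnitInterval ⟨r, hr0, hr1⟩, mem_range_self _, har, hrb⟩

theorem fusion_construction (X : ℕ → Set Q01) (α : ℕ → ℝ) (hα : memS α) :
    ∃ x ∈ Set.Icc (0 : ℝ) 1, ∃ Y : Set Q01, Y.Infinite ∧ ConvTo Y x ∧
      (∀ n, (Y ∩ X n).Finite ∨ (Y \ X n).Finite) ∧
      ∃ k₀ : ℕ, ∀ k ≥ k₀,
        ∃ q ∈ Y, α (k + 1) ≤ |qr q - x| ∧ |qr q - x| < α k :=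
  let ⟨x, hx⟩ := fusion_construction_general denseRange_toUnitInterval X hα.2.2.1 hα.2.2.2
  ⟨x, x.2, hx⟩
end

section
/- There exists a Borel (in fact Σ⁰₆) ideal I on a countable set such that I cannot be extended to any P⁺-ideal (equivalently, to any Σ⁰₂ ideal) and conv ≰_K I; namely I = conv(I_d,(1/2^{n+1})) is such an ideal. -/
open Filter Topology Set

/-! Let `J` be a P⁺-ideal containing `conv(I, α)`. Deciding one rational cut at a time and taking a
pseudo-intersection gives a `J`-positive set that no rational cut splits. Such a set converges to
some `x`, and the image of `J` on it under the index of the annulus around `x` is a P⁺-ideal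
extending `I`. For `I` the density zero ideal there is none: by the same construction it would have
a positive set unsplit by residue classes modulo every `m`, but such a set has density zero.

Let `f` be a map from `[0,1] ∩ ℚ` to `[0,1]`. By the Baire category theorem and compactness there
are points `x` and `y` such that every neighbourhood of `y` has a preimage dense near `x`. Hence one
can choose a point in almost every annulus around `x` so that the `f`-images of the chosen points
converge to `y`. The chosen set is too slow to be in `conv(I, α)`, so `f` is not a Katětov
reduction of `conv`.

On infinite convergent sets the limit is a Baire class one function of the set, so hitting the
`n`-th annulus around the limit is a `Δ⁰₃` condition, and `I`-quick convergence is `Π⁰ₙ₊₂` when `I`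
is `Π⁰ₙ`. By compactness of `[0,1]`, membership in `conv(I, α)` means that for some radius the
traces on all balls of that radius converge `I`-quickly, which is `Σ⁰ₙ₊₃`. Density zero is `Π⁰₃`.
-/

section BorelHierarchy

variable {X Y : Type*} [TopologicalSpace X] [TopologicalSpace Y] {n : ℕ} {S T : Set X}

namespace IsSigma0

lemma of_isClopen (hS : IsClopen S) (n : ℕ) : IsSigma0 (n + 1) S := by
  induction n generalizing S with
  | zero => exact hS.isOpen
  | succ n ih => exact ⟨fun _ => S, fun _ => ih hS.compl, (iUnion_const S).symm⟩

lemma of_compl (hS : IsSigma0 (n + 1) Sᶜ) : IsSigma0 (n + 2) S :=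
  ⟨fun _ => S, fun _ => hS, (iUnion_const S).symm⟩

lemma compl (hS : IsSigma0 (n + 1) S) : IsSigma0 (n + 2) Sᶜ :=
  of_compl (by rwa [compl_compl])

lemma succ [TopologicalSpace.PseudoMetrizableSpace X] (hS : IsSigma0 (n + 1) S) :
    IsSigma0 (n + 2) S := by
  induction n generalizing S with
  | zero =>
    let _ := TopologicalSpace.pseudoMetrizableSpacePseudoMetric X
    obtain ⟨F, hF, -, hFS, -⟩ := IsOpen.exists_iUnion_isClosed (U := S) hS
    exact ⟨F, fun k => (hF k).isOpen_compl, hFS.symm⟩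
  | succ n ih =>
    obtain ⟨f, hf, rfl⟩ := hS
    exact ⟨f, fun k => ih (hf k), rfl⟩

lemma mono [TopologicalSpace.PseudoMetrizableSpace X] {m : ℕ} (hS : IsSigma0 (m + 1) S)
    (hmn : m ≤ n) : IsSigma0 (n + 1) S :=
  Nat.le_induction hS (fun _ _ h => h.succ) n hmn

lemma iUnion {ι : Sort*} [Countable ι] {S : ι → Set X} (hS : ∀ i, IsSigma0 (n + 1) (S i)) :
    IsSigma0 (n + 1) (⋃ i, S i) := by
  rcases isEmpty_or_nonempty ι with hι | hι
  · rw [iUnion_of_empty]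
    exact of_isClopen isClopen_empty n
  cases n with
  | zero => exact isOpen_iUnion hS
  | succ n =>
    choose f hf hfS using hS
    obtain ⟨e, he⟩ := exists_surjective_nat (PLift ι × ℕ)
    refine ⟨fun k => f (e k).1.down (e k).2, fun k => hf _ _, ?_⟩
    rw [he.iUnion_comp (fun p : PLift ι × ℕ => f p.1.down p.2), iUnion_prod',
      iUnion_plift_down fun i => ⋃ k, f i k]
    exact iUnion_congr hfS

lemma union (hS : IsSigma0 (n + 1) S) (hT : IsSigma0 (n + 1) T) : IsSigma0 (n + 1) (S ∪ T) := by
  rw [union_eq_iUnion]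
  exact iUnion (Bool.forall_bool.2 ⟨hT, hS⟩)

lemma inter (hS : IsSigma0 (n + 1) S) (hT : IsSigma0 (n + 1) T) : IsSigma0 (n + 1) (S ∩ T) := by
  cases n with
  | zero => exact IsOpen.inter hS hT
  | succ n =>
    obtain ⟨f, hf, rfl⟩ := hS
    obtain ⟨g, hg, rfl⟩ := hT
    rw [iUnion_inter_iUnion, ← iUnion_prod' fun p : ℕ × ℕ => f p.1 ∩ g p.2]
    refine iUnion fun p => of_compl ?_
    rw [compl_inter]
    exact (hf p.1).union (hg p.2)

lemma biInter_finset {ι : Type*} {S : ι → Set X} (F : Finset ι)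
    (hS : ∀ i ∈ F, IsSigma0 (n + 1) (S i)) : IsSigma0 (n + 1) (⋂ i ∈ F, S i) := by
  classical
  induction F using Finset.induction_on with
  | empty => simpa using of_isClopen isClopen_univ n
  | insert a F _ ih =>
    rw [Finset.forall_mem_insert] at hS
    rw [Finset.set_biInter_insert]
    exact hS.1.inter (ih hS.2)

lemma preimage_of_isOpen {g : X → Y} {m : ℕ} (hg : ∀ U, IsOpen U → IsSigma0 (m + 1) (g ⁻¹' U))
    {S : Set Y} (hS : IsSigma0 (n + 1) S) : IsSigma0 (m + n + 1) (g ⁻¹' S) := by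
  induction n generalizing S with
  | zero => exact hg S hS
  | succ n ih =>
    obtain ⟨f, hf, rfl⟩ := hS
    exact ⟨fun k => g ⁻¹' f k, fun k => ih (hf k), preimage_iUnion⟩

lemma preimage {S : Set Y} (hS : IsSigma0 (n + 1) S) {g : X → Y} (hg : Continuous g) :
    IsSigma0 (n + 1) (g ⁻¹' S) :=
  Nat.zero_add n ▸ hS.preimage_of_isOpen (m := 0) fun _ hU => hU.preimage hg

lemma exists_preimage_eq (hS : IsSigma0 (n + 1) S) {g : X → Y} (hg : IsInducing g) :
    ∃ T, IsSigma0 (n + 1) T ∧ g ⁻¹' T = S := by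
  induction n generalizing S with
  | zero => exact hg.isOpen_iff.1 hS
  | succ n ih =>
    obtain ⟨f, hf, rfl⟩ := hS
    choose T hT hTf using fun k => ih (hf k)
    refine ⟨⋃ k, (T k)ᶜ, iUnion fun k => (hT k).compl, ?_⟩
    simp only [preimage_iUnion, preimage_compl, hTf, compl_compl]

lemma preimage_of_forall_coord {ι : Type*} [Countable ι] {g : X → ι → Bool} {m : ℕ}
    (hg : ∀ i b, IsSigma0 (m + 1) {x | g x i = b}) {S : Set (ι → Bool)}
    (hS : IsSigma0 (n + 1) S) : IsSigma0 (m + n + 1) (g ⁻¹' S) := by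
  classical
  refine hS.preimage_of_isOpen fun U hU => ?_
  have hcyl : g ⁻¹' U = ⋃ F : {F : Finset (ι × Bool) //
      ∀ f : ι → Bool, (∀ p ∈ F, f p.1 = p.2) → f ∈ U}, ⋂ p ∈ F.1, {x | g x p.1 = p.2} := by
    ext x
    simp only [mem_preimage, mem_iUnion, mem_iInter]
    refine ⟨fun hx => ?_, fun ⟨F, hF⟩ => F.2 _ hF⟩
    obtain ⟨J, u, hu, huU⟩ := isOpen_pi_iff.1 hU _ hx
    refine ⟨⟨J.image fun i => (i, g x i), fun f hf => huU fun i hi => ?_⟩, ?_⟩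
    · rw [hf _ (Finset.mem_image_of_mem _ hi)]
      exact (hu i hi).2
    · exact Finset.forall_mem_image.2 fun i _ => rfl
  rw [hcyl]
  exact iUnion fun F => biInter_finset F.1 fun p _ => hg p.1 p.2

end IsSigma0

lemma isSigma0_compl_tendsto {Z : Type*} [PseudoMetricSpace Z] {u : ℕ → X → Z}
    (hu : ∀ n, Continuous (u n)) (z : Z) :
    IsSigma0 3 {x | Tendsto (fun n => u n x) atTop (𝓝 z)}ᶜ := by
  have heq : {x | Tendsto (fun n => u n x) atTop (𝓝 z)} =
      ⋂ j : ℕ, ⋃ N : ℕ, ⋂ n : Ici N, u n ⁻¹' Metric.closedBall z (1 / (j + 1)) := by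
    ext x
    simp only [mem_ofPred_eq, mem_iInter, mem_iUnion, Subtype.forall, mem_preimage,
      atTop_basis.tendsto_iff Metric.nhds_basis_closedBall_inv_nat_succ, forall_const, true_and]
  rw [heq, compl_iInter]
  refine IsSigma0.iUnion fun j => IsSigma0.compl <| IsSigma0.iUnion fun N => IsSigma0.of_compl ?_
  exact (isClosed_iInter fun n : Ici N => Metric.isClosed_closedBall.preimage (hu n)).isOpen_compl

lemma toSet_decide {Q : Type*} (P : Set Q) [DecidablePred (· ∈ P)] :
    toSet (fun q => decide (q ∈ P)) = P := by
  ext q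
  simp [toSet]

lemma toSet_and_decide {Q : Type*} (f : Q → Bool) (P : Set Q) [DecidablePred (· ∈ P)] :
    toSet (fun q => f q && decide (q ∈ P)) = toSet f ∩ P := by
  ext q
  simp [toSet]

lemma isSigma0_finite_toSet_inter {Q : Type*} [Countable Q] (P : Set Q) :
    IsSigma0 2 {f : Q → Bool | (toSet f ∩ P).Finite} := by
  have heq : {f : Q → Bool | (toSet f ∩ P).Finite} =
      ⋃ F : Finset Q, ⋂ q ∈ P \ F, {f | f q = false} := by
    ext f
    simp only [mem_ofPred_eq, mem_iUnion, mem_iInter, Set.mem_sdiff, ← Bool.not_eq_true]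
    refine ⟨fun h => ⟨h.toFinset, fun q hq hqf => hq.2 ?_⟩, fun ⟨F, hF⟩ => ?_⟩
    · exact h.mem_toFinset.2 ⟨hqf, hq.1⟩
    · exact F.finite_toSet.subset fun q hq => by_contra fun hqF => hF q ⟨hq.2, hqF⟩ hq.1
  rw [heq]
  refine IsSigma0.iUnion fun F => IsSigma0.of_compl ?_
  exact (isClosed_biInter fun q _ => isClosed_eq (continuous_apply q) continuous_const).isOpen_compl

end BorelHierarchy

section Ideals

variable {X Y : Type*} {J : Set (Set X)} {A B : Set X}

namespace IsIdeal

lemma mono (hJ : IsIdeal J) (hA : A ∈ J) (h : B ⊆ A) : B ∈ J :=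
  hJ.1 A hA B h

lemma union (hJ : IsIdeal J) (hA : A ∈ J) (hB : B ∈ J) : A ∪ B ∈ J :=
  hJ.2.1 A hA B hB

lemma of_finite (hJ : IsIdeal J) (hA : A.Finite) : A ∈ J :=
  hJ.2.2.1 A hA

lemma univ_notMem (hJ : IsIdeal J) : univ ∉ J :=
  hJ.2.2.2

lemma mem_of_finite_sdiff (hJ : IsIdeal J) (hB : B ∈ J) (h : (A \ B).Finite) : A ∈ J :=
  hJ.mono (hJ.union hB (hJ.of_finite h)) fun x hx =>
    (em (x ∈ B)).imp_right fun hxB => ⟨hx, hxB⟩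

end IsIdeal

/-- The ideal `I` extends to a P⁺-ideal. -/
def ExtendsToPPlus (I : Set (Set X)) : Prop :=
  ∃ J : Set (Set X), IsIdeal J ∧ IsPPlus J ∧ I ⊆ J

/-- The image under `f` of the restriction of `J` to `B`; it is an ideal when `B` is `J`-positive
and `f` is finite-to-one on `B`. -/
def pushforwardOn (J : Set (Set X)) (B : Set X) (f : X → Y) : Set (Set Y) :=
  {C | B ∩ f ⁻¹' C ∈ J}

lemma IsIdeal.pushforwardOn (hJ : IsIdeal J) (hB : B ∉ J) {f : X → Y}
    (hf : ∀ y, B ∩ f ⁻¹' {y} ∈ J) : IsIdeal (pushforwardOn J B f) := by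
  refine ⟨fun C hC D hDC => hJ.mono hC (by gcongr), fun C hC D hD => ?_, fun C hC => ?_, ?_⟩
  · exact hJ.mono (hJ.union hC hD) (by rw [preimage_union, inter_union_distrib_left])
  · induction C, hC using Set.Finite.induction_on with
    | empty => exact hJ.of_finite (by simp)
    | @insert y C _ _ ih =>
      refine hJ.mono (hJ.union (hf y) ih) ?_
      rw [← inter_union_distrib_left, ← preimage_union, singleton_union]
  · exact fun h => hB (hJ.mono h (by simp))

lemma IsPPlus.pushforwardOn (hP : IsPPlus J) (hJ : IsIdeal J) (B : Set X) (f : X → Y) :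
    IsPPlus (pushforwardOn J B f) := by
  intro A hA hAJ
  obtain ⟨D, hD, hDA⟩ := hP (fun n => B ∩ f ⁻¹' A n)
    (fun n => inter_subset_inter_right _ (preimage_mono (hA n))) hAJ
  have hDB : (D \ B).Finite := (hDA 0).subset (sdiff_subset_sdiff_right inter_subset_left)
  refine ⟨f '' D, fun h => hD (hJ.mem_of_finite_sdiff h (hDB.subset fun x hx => ?_)), fun n => ?_⟩
  · exact ⟨hx.1, fun hxB => hx.2 ⟨hxB, mem_image_of_mem f hx.1⟩⟩
  · refine ((hDA n).image f).subset ?_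
    rintro _ ⟨⟨x, hx, rfl⟩, hxA⟩
    exact ⟨x, ⟨hx, fun h => hxA h.2⟩, rfl⟩

/-- No member of the family `P` splits `B` into two infinite pieces. -/
def Unsplit {ι : Type*} (P : ι → Set X) (B : Set X) : Prop :=
  ∀ i, (B ∩ P i).Finite ∨ (B \ P i).Finite

lemma IsPPlus.exists_unsplit (hP : IsPPlus J) (hJ : IsIdeal J) {ι : Type*} [Countable ι]
    [Nonempty ι] (P : ι → Set X) : ∃ B ∉ J, Unsplit P B := by
  classical
  obtain ⟨e, he⟩ := exists_surjective_nat ι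
  obtain ⟨s, hs₀, hs⟩ : ∃ s : ℕ → Set X, s 0 = univ ∧ ∀ n, s (n + 1) =
      if s n ∩ P (e n) ∈ J then s n \ P (e n) else s n ∩ P (e n) :=
    ⟨fun n => Nat.rec univ (fun n S => if S ∩ P (e n) ∈ J then S \ P (e n) else S ∩ P (e n)) n,
      rfl, fun n => rfl⟩
  have hanti : ∀ n, s (n + 1) ⊆ s n := fun n => by
    rw [hs]
    split_ifs
    exacts [sdiff_subset, inter_subset_left]
  have hpos : ∀ n, s n ∉ J := fun n => by
    induction n with
    | zero => exact hs₀ ▸ hJ.univ_notMem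
    | succ n ih =>
      rw [hs]
      split_ifs with h
      exacts [fun h' => ih (hJ.mono (hJ.union h h') (inter_union_sdiff _ _).ge), h]
  obtain ⟨B, hB, hBs⟩ := hP s hanti hpos
  refine ⟨B, hB, he.forall.2 fun n => ?_⟩
  have hBn := hBs (n + 1)
  rw [hs] at hBn
  split_ifs at hBn
  · exact Or.inl (hBn.subset fun x hx => ⟨hx.1, fun h => h.2 hx.2⟩)
  · exact Or.inr (hBn.subset (sdiff_subset_sdiff_right inter_subset_right))

end Ideals

section DensityZero

variable {A : Set ℕ}

lemma mem_densityZero_iff :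
    A ∈ densityZero ↔
      ∀ ε > 0, ∀ᶠ n : ℕ in atTop, ((A ∩ Iic n).ncard : ℝ) / (n + 1) < ε := by
  have hnonneg : ∀ n : ℕ, 0 ≤ ((A ∩ Iic n).ncard : ℝ) / (n + 1) := fun n => by positivity
  simp only [densityZero, mem_ofPred_eq, Metric.tendsto_nhds, dist_zero_right, Real.norm_eq_abs,
    abs_of_nonneg (hnonneg _)]

lemma tendsto_const_div_add_one (C : ℝ) : Tendsto (fun n : ℕ => C / (n + 1)) atTop (𝓝 0) := by
  simpa [Function.comp_def] using
    (tendsto_const_div_atTop_nhds_zero_nat C).comp (tendsto_add_atTop_nat 1)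

lemma isIdeal_densityZero : IsIdeal densityZero := by
  refine ⟨fun A hA B hBA => ?_, fun A hA B hB => ?_, fun A hA => ?_, fun h => ?_⟩
  · refine squeeze_zero (fun n => by positivity) (fun n => ?_) hA
    gcongr
    exact (finite_Iic n).inter_of_right A
  · refine squeeze_zero (fun n => by positivity) (fun n => ?_) (by simpa using hA.add hB)
    rw [← add_div, union_inter_distrib_right]
    gcongr
    exact_mod_cast ncard_union_le _ _
  · refine squeeze_zero (fun n => by positivity) (fun n => ?_)
      (tendsto_const_div_add_one A.ncard)
    gcongr
    exact inter_subset_left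
  · have hone : ∀ n : ℕ, ((univ ∩ Iic n : Set ℕ).ncard : ℝ) / (n + 1) = 1 := fun n => by
      rw [univ_inter, ← Finset.coe_Iic, ncard_coe_finset, Nat.card_Iic, Nat.cast_succ]
      exact div_self (by positivity)
    exact one_ne_zero (tendsto_nhds_unique tendsto_const_nhds (h.congr hone))

lemma isSigma0_compl_densityZero : IsSigma0 3 {f : ℕ → Bool | toSet f ∈ densityZero}ᶜ := by
  have hsum : ∀ (n : ℕ) (f : ℕ → Bool),
      (toSet f ∩ Iic n).ncard = ∑ i ∈ Finset.Iic n, (f i).toNat := fun n f => by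
    have heq : toSet f ∩ Iic n = ↑{i ∈ Finset.Iic n | f i = true} := by
      ext i
      simp [toSet, and_comm]
    rw [heq, ncard_coe_finset, Finset.card_filter]
    exact Finset.sum_congr rfl fun i _ => by cases f i <;> rfl
  refine isSigma0_compl_tendsto
    (u := fun n f => ((toSet f ∩ Iic n).ncard : ℝ) / (n + 1)) (fun n => ?_) 0
  simp only [hsum]
  fun_prop

lemma ncard_modEq_inter_Iic_le {m : ℕ} (hm : 0 < m) (c n : ℕ) :
    ({i | i ≡ c [MOD m]} ∩ Iic n).ncard ≤ (n + 1) / m + 1 := by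
  have heq : {i | i ≡ c [MOD m]} ∩ Iic n = ↑{i ∈ Finset.range (n + 1) | i ≡ c [MOD m]} := by
    ext i
    simp [Order.lt_add_one_iff, and_comm]
  rw [heq, ncard_coe_finset, ← Nat.count_eq_card_filter_range, Nat.count_modEq_card _ hm]
  split_ifs <;> omega

lemma mem_densityZero_of_unsplit_modEq
    (hA : Unsplit (fun p : ℕ × ℕ => {i | i ≡ p.2 [MOD p.1]}) A) : A ∈ densityZero := by
  have hclass : ∀ m > 0, ∃ c, (A \ {i | i ≡ c [MOD m]}).Finite := by
    intro m hm
    by_contra! hinf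
    refine hinf 0 (((finite_Iio m).biUnion fun c _ => (hA (m, c)).resolve_right (hinf c)).subset ?_)
    exact fun i hi => mem_biUnion (mem_Iio.2 (Nat.mod_lt i hm)) ⟨hi.1, (Nat.mod_modEq i m).symm⟩
  refine mem_densityZero_iff.2 fun ε hε => ?_
  obtain ⟨k, hk⟩ := exists_nat_one_div_lt hε
  obtain ⟨c, hc⟩ := hclass (k + 1) k.succ_pos
  set F := A \ {i | i ≡ c [MOD k + 1]}
  have hcard : ∀ n, (A ∩ Iic n).ncard ≤ F.ncard + ((n + 1) / (k + 1) + 1) := fun n => calc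
    (A ∩ Iic n).ncard ≤ (F ∪ {i | i ≡ c [MOD k + 1]} ∩ Iic n).ncard :=
      ncard_le_ncard (fun i hi => or_iff_not_imp_right.2 fun h => ⟨hi.1, fun hic => h ⟨hic, hi.2⟩⟩)
        (hc.union ((finite_Iic n).inter_of_right _))
    _ ≤ F.ncard + ({i | i ≡ c [MOD k + 1]} ∩ Iic n).ncard := ncard_union_le _ _
    _ ≤ F.ncard + ((n + 1) / (k + 1) + 1) := by
      gcongr
      exact ncard_modEq_inter_Iic_le k.succ_pos c n
  have hbound : ∀ n : ℕ, ((A ∩ Iic n).ncard : ℝ) / (n + 1) ≤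
      (F.ncard + 1 : ℝ) / (n + 1) + 1 / (k + 1) := fun n => by
    have hfloor : (((n + 1) / (k + 1) : ℕ) : ℝ) ≤ (n + 1) / (k + 1) := by
      exact_mod_cast Nat.cast_div_le (α := ℝ) (m := n + 1) (n := k + 1)
    have hcast : ((A ∩ Iic n).ncard : ℝ) ≤ F.ncard + (((n + 1) / (k + 1) : ℕ) + 1) := by
      exact_mod_cast hcard n
    calc ((A ∩ Iic n).ncard : ℝ) / (n + 1)
        ≤ (F.ncard + 1 + (n + 1) / (k + 1)) / (n + 1) := by gcongr; linarith
      _ = (F.ncard + 1 : ℝ) / (n + 1) + 1 / (k + 1) := by field_simp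
  have hlim := (tendsto_const_div_add_one (F.ncard + 1)).add_const (1 / (k + 1 : ℝ))
  rw [zero_add] at hlim
  filter_upwards [hlim.eventually_lt_const hk] with n hn using (hbound n).trans_lt hn

lemma not_extendsToPPlus_densityZero : ¬ ExtendsToPPlus densityZero := by
  rintro ⟨J, hJ, hP, hsub⟩
  obtain ⟨A, hA, hunsplit⟩ :=
    hP.exists_unsplit hJ fun p : ℕ × ℕ => {i | i ≡ p.2 [MOD p.1]}
  exact hA (hsub (mem_densityZero_of_unsplit_modEq hunsplit))

end DensityZero

section Convergence

variable {S T : Set Q01} {x y : ℝ}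

lemma qr_mem_Icc (q : Q01) : qr q ∈ Icc (0 : ℝ) 1 :=
  ⟨Rat.cast_nonneg.2 q.2.1, (Rat.cast_le.2 q.2.2).trans_eq Rat.cast_one⟩

lemma convTo_iff_tendsto : ConvTo S x ↔ Tendsto qr (cofinite ⊓ 𝓟 S) (𝓝 x) := by
  simp only [ConvTo, Metric.tendsto_nhds, eventually_inf_principal, eventually_cofinite,
    Real.dist_eq, Classical.not_imp, not_lt]

lemma convTo_range_of_tendsto {u : ℕ → Q01} (hu : Tendsto (fun n => qr (u n)) atTop (𝓝 x)) :
    ConvTo (range u) x := by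
  intro ε hε
  have hfin : {n | ε ≤ |qr (u n) - x|}.Finite := by
    have hev := Nat.cofinite_eq_atTop ▸ Metric.tendsto_nhds.1 hu ε hε
    simpa only [eventually_cofinite, Real.dist_eq, not_lt] using hev
  refine (hfin.image u).subset ?_
  rintro _ ⟨⟨n, rfl⟩, hn⟩
  exact mem_image_of_mem u hn

namespace ConvTo

lemma mono (hS : ConvTo S x) (h : T ⊆ S) : ConvTo T x :=
  fun ε hε => (hS ε hε).subset fun _ hq => ⟨h hq.1, hq.2⟩

lemma union (hS : ConvTo S x) (hT : ConvTo T x) : ConvTo (S ∪ T) x :=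
  fun ε hε => ((hS ε hε).union (hT ε hε)).subset fun _ hq => hq.1.imp (⟨·, hq.2⟩) (⟨·, hq.2⟩)

lemma of_finite (hS : S.Finite) (x : ℝ) : ConvTo S x :=
  fun _ _ => hS.subset (sep_subset S _)

lemma unique (hx : ConvTo S x) (hy : ConvTo S y) (hS : S.Infinite) : x = y :=
  have := cofinite_inf_principal_neBot_iff.2 hS
  tendsto_nhds_unique (convTo_iff_tendsto.1 hx) (convTo_iff_tendsto.1 hy)

end ConvTo

lemma ConvTo.mem_convIdeal (hx : x ∈ Icc (0 : ℝ) 1) (hS : ConvTo S x) : S ∈ convIdeal :=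
  ⟨{S}, by simpa using ⟨x, hx, hS⟩, by simp⟩

lemma exists_convTo_iff : (∃ x ∈ Icc (0 : ℝ) 1, ConvTo S x) ↔
    ∀ p p' : ℚ, p < p' → (S ∩ {q | qr q < p}).Finite ∨ (S ∩ {q | p' < qr q}).Finite := by
  have hfin : ∀ P : Q01 → Prop,
      (S ∩ {q | P q}).Finite ↔ ∀ᶠ q in cofinite ⊓ 𝓟 S, ¬ P q := fun P => by
    simp only [eventually_inf_principal, eventually_cofinite, Classical.not_imp, not_not]
    rfl
  simp only [hfin, not_lt]
  refine ⟨fun ⟨x, _, hSx⟩ p p' hpp => ?_, fun h => ?_⟩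
  · have hlim := convTo_iff_tendsto.1 hSx
    have hcast : (p : ℝ) < p' := Rat.cast_lt.2 hpp
    rcases lt_or_ge (p : ℝ) x with hpx | hxp
    · exact Or.inl ((hlim.eventually_const_lt hpx).mono fun _ => le_of_lt)
    · exact Or.inr ((hlim.eventually_lt_const (hxp.trans_lt hcast)).mono fun _ => le_of_lt)
  · rcases S.finite_or_infinite with hS | hS
    · exact ⟨0, by simp, .of_finite hS 0⟩
    have := cofinite_inf_principal_neBot_iff.2 hS
    have hIcc : ∀ᶠ q in cofinite ⊓ 𝓟 S, qr q ∈ Icc (0 : ℝ) 1 := .of_forall qr_mem_Icc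
    obtain ⟨x, hx⟩ := tendsto_of_no_upcrossings Rat.isDenseEmbedding_coe_real.dense
      (f := cofinite ⊓ 𝓟 S) (u := qr) (by
        rintro _ ⟨p, rfl⟩ _ ⟨p', rfl⟩ hpp ⟨hlt, hgt⟩
        rcases h p p' (Rat.cast_lt.1 hpp) with h | h
        · exact hlt (h.mono fun _ => not_lt.2)
        · exact hgt (h.mono fun _ => not_lt.2))
      (isBoundedUnder_of_eventually_le (hIcc.mono fun _ => And.right))
      (isBoundedUnder_of_eventually_ge (hIcc.mono fun _ => And.left))
    exact ⟨x, isClosed_Icc.mem_of_tendsto hx hIcc, convTo_iff_tendsto.2 hx⟩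

lemma exists_convTo_of_unsplit (hS : Unsplit (fun p : ℚ => {q | qr q < p}) S) :
    ∃ x ∈ Icc (0 : ℝ) 1, ConvTo S x :=
  exists_convTo_iff.2 fun p _ hpp => (hS p).imp_right fun h => h.subset fun q hq =>
    ⟨hq.1, fun hqp : qr q < p => ((Rat.cast_lt.2 hpp).trans hq.2).not_gt hqp⟩

end Convergence

section QuickConvergence

/-- The indices `n` of the annuli `[α (n + 1), α n)` around `x` that meet `S`. -/
def annuliHit (α : ℕ → ℝ) (S : Set Q01) (x : ℝ) : Set ℕ :=
  {n : ℕ | ∃ q ∈ S, α (n + 1) ≤ |qr q - x| ∧ |qr q - x| < α n}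

/-- The index of the annulus `[α (n + 1), α n)` around `x` that contains `q`, for a null sequence
`α`. It is `0` also for `q` at distance at least `α 0`, and, as a junk value, at `x` itself. -/
noncomputable def annulusIndex (α : ℕ → ℝ) (x : ℝ) (q : Q01) : ℕ :=
  sInf {n | α (n + 1) ≤ |qr q - x|}

variable {I : Set (Set ℕ)} {α : ℕ → ℝ} {S T A : Set Q01} {x y : ℝ}

lemma annulusIndex_eq (hα : Antitone α) {q : Q01} {n : ℕ} (hle : α (n + 1) ≤ |qr q - x|)
    (hlt : |qr q - x| < α n) : annulusIndex α x q = n := by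
  refine le_antisymm (Nat.sInf_le hle) (le_csInf ⟨n, hle⟩ fun m hm => ?_)
  by_contra! hmn
  exact (hlt.trans_le (hα hmn)).not_ge hm

lemma annuliHit_inter_preimage_annulusIndex_subset (hα : Antitone α) (S : Set Q01) (x : ℝ)
    (C : Set ℕ) : annuliHit α (S ∩ annulusIndex α x ⁻¹' C) x ⊆ C := by
  rintro n ⟨q, ⟨-, hq⟩, hle, hlt⟩
  rwa [mem_preimage, annulusIndex_eq hα hle hlt] at hq

namespace IQuickTo

lemma mono (hI : IsIdeal I) (hS : IQuickTo I α S x) (h : T ⊆ S) : IQuickTo I α T x :=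
  ⟨hS.1.mono h, hI.mono hS.2 fun _ ⟨q, hq, hqn⟩ => ⟨q, h hq, hqn⟩⟩

lemma union (hI : IsIdeal I) (hS : IQuickTo I α S x) (hT : IQuickTo I α T x) :
    IQuickTo I α (S ∪ T) x :=
  ⟨hS.1.union hT.1, hI.mono (hI.union hS.2 hT.2) fun _ ⟨q, hq, hqn⟩ =>
    hq.imp (fun h => ⟨q, h, hqn⟩) (fun h => ⟨q, h, hqn⟩)⟩

lemma of_finite (hI : IsIdeal I) (hα : Antitone α) (hS : S.Finite) (x : ℝ) :
    IQuickTo I α S x :=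
  ⟨.of_finite hS x, hI.of_finite <| (hS.image (annulusIndex α x)).subset
    fun _ ⟨q, hq, hle, hlt⟩ => ⟨q, hq, annulusIndex_eq hα hle hlt⟩⟩

lemma sUnion_finset (hI : IsIdeal I) (hα : Antitone α) {F : Finset (Set Q01)}
    (hF : ∀ S ∈ F, IQuickTo I α (S ∩ A) x) : IQuickTo I α (⋃₀ F ∩ A) x := by
  classical
  induction F using Finset.induction_on with
  | empty => simpa using of_finite hI hα finite_empty x
  | insert S F _ ih =>
    rw [Finset.forall_mem_insert] at hF
    rw [Finset.coe_insert, sUnion_insert, union_inter_distrib_right]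
    exact hF.1.union hI (ih hF.2)

lemma eventually_inter_ball (hI : IsIdeal I) (hα : Antitone α) (hS : IQuickTo I α S y) (x : ℝ) :
    ∀ᶠ ε in 𝓝[>] (0 : ℝ), IQuickTo I α (S ∩ {q | |qr q - x| < ε}) x := by
  rcases eq_or_ne x y with rfl | hxy
  · exact .of_forall fun ε => hS.mono hI inter_subset_left
  · have hpos : 0 < |x - y| / 2 := half_pos (abs_sub_pos.2 hxy)
    filter_upwards [Ioo_mem_nhdsGT hpos] with ε hε
    refine of_finite hI hα ((hS.1 _ hpos).subset fun q hq => ⟨hq.1, ?_⟩) x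
    have hdist : |x - y| ≤ |qr q - x| + |qr q - y| := by
      simpa only [Real.dist_eq] using dist_triangle_left x y (qr q)
    linarith [hq.2.trans hε.2]

end IQuickTo

lemma IQuick.mem_convQI (hS : IQuick I α S) : S ∈ convQI I α :=
  ⟨{S}, by simpa using hS, by simp⟩

lemma exists_iQuickTo_inter_ball (hI : IsIdeal I) (hα : Antitone α) (hA : A ∈ convQI I α)
    (x : ℝ) : ∃ ε > 0, IQuickTo I α (A ∩ {q | |qr q - x| < ε}) x := by
  obtain ⟨F, hF, hAF⟩ := hA
  have hev : ∀ᶠ ε in 𝓝[>] (0 : ℝ), ∀ S ∈ F, IQuickTo I α (S ∩ {q | |qr q - x| < ε}) x :=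
    F.eventually_all.2 fun S hS => by
      obtain ⟨y, -, hy⟩ := hF S hS
      exact hy.eventually_inter_ball hI hα x
  obtain ⟨ε, hFε, hε⟩ := (hev.and self_mem_nhdsWithin).exists
  exact ⟨ε, hε, (IQuickTo.sUnion_finset hI hα hFε).mono hI (inter_subset_inter_left _ hAF)⟩

lemma ConvTo.iQuickTo_of_mem_convQI (hI : IsIdeal I) (hα : Antitone α) (hA : A ∈ convQI I α)
    (hx : ConvTo A x) : IQuickTo I α A x := by
  obtain ⟨ε, hε, hball⟩ := exists_iQuickTo_inter_ball hI hα hA x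
  refine (hball.union hI (.of_finite hI hα (hx ε hε) x)).mono hI fun q hq => ?_
  exact (lt_or_ge (|qr q - x|) ε).imp (⟨hq, ·⟩) (⟨hq, ·⟩)

lemma mem_convQI_iff (hI : IsIdeal I) (hα : Antitone α) :
    A ∈ convQI I α ↔
      ∃ k : ℕ, ∀ c : Q01, IQuick I α (A ∩ {q | |qr q - qr c| < 1 / (k + 1)}) := by
  classical
  refine ⟨fun hA => ?_, fun ⟨k, hk⟩ => ?_⟩
  · choose ε hε hquick using exists_iQuickTo_inter_ball hI hα hA
    obtain ⟨δ, hδ, hball⟩ := lebesgue_number_lemma_of_metric (isCompact_Icc (a := (0 : ℝ)) (b := 1))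
      (c := fun x : Icc (0 : ℝ) 1 => Metric.ball (x : ℝ) (ε x)) (fun _ => Metric.isOpen_ball)
      fun x hx => mem_iUnion.2 ⟨⟨x, hx⟩, Metric.mem_ball_self (hε x)⟩
    obtain ⟨k, hk⟩ := exists_nat_one_div_lt hδ
    refine ⟨k, fun c => ?_⟩
    obtain ⟨x, hx⟩ := hball (qr c) (qr_mem_Icc c)
    exact ⟨x, x.2, (hquick x).mono hI fun q hq => ⟨hq.1, hx (hq.2.trans hk)⟩⟩
  · have htb : TotallyBounded (range qr) :=
      isCompact_Icc.totallyBounded.subset (range_subset_iff.2 qr_mem_Icc)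
    obtain ⟨C, hC, hCfin, hcover⟩ :=
      Metric.finite_approx_of_totallyBounded htb (1 / (k + 1)) (by positivity)
    lift C to Finset ℝ using hCfin
    obtain ⟨D, -, rfl⟩ := Finset.subset_set_image_iff.1 (image_univ (f := qr) ▸ hC)
    refine ⟨D.image fun c => A ∩ {q | |qr q - qr c| < 1 / (k + 1)},
      Finset.forall_mem_image.2 fun c _ => hk c, fun q hq => ?_⟩
    obtain ⟨_, hc, hqc⟩ := mem_iUnion₂.1 (hcover (mem_range_self q))
    obtain ⟨c, hcD, rfl⟩ := Finset.mem_image.1 hc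
    exact ⟨_, Finset.mem_coe.2 (Finset.mem_image_of_mem _ hcD), hq, hqc⟩

end QuickConvergence

section NonExtendability

variable {I : Set (Set ℕ)} {α : ℕ → ℝ}

lemma pos_of_strictAnti_of_tendsto_zero (hα : StrictAnti α) (hlim : Tendsto α atTop (𝓝 0)) (n : ℕ) :
    0 < α n :=
  (hα.antitone.le_of_tendsto hlim (n + 1)).trans_lt (hα n.lt_succ_self)

lemma ConvTo.finite_inter_preimage_annulusIndex {B : Set Q01} {x : ℝ} (hB : ConvTo B x)
    (hα : StrictAnti α) (hlim : Tendsto α atTop (𝓝 0)) (n : ℕ) :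
    (B ∩ annulusIndex α x ⁻¹' {n}).Finite := by
  have hcenter : {q | qr q = x}.Subsingleton := fun q hq r hr =>
    Subtype.ext (Rat.cast_injective (hq.trans hr.symm))
  have hfar := hB _ (pos_of_strictAnti_of_tendsto_zero hα hlim (n + 1))
  refine (hfar.union hcenter.finite).subset fun q ⟨hqB, hq⟩ => ?_
  rcases eq_or_ne (qr q) x with hqx | hqx
  · exact Or.inr hqx
  · have hne : {m | α (m + 1) ≤ |qr q - x|}.Nonempty :=
      ((hlim.comp (tendsto_add_atTop_nat 1)).eventually_le_const
        (abs_sub_pos.2 hqx)).exists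
    exact Or.inl ⟨hqB, (mem_singleton_iff.1 hq) ▸ Nat.sInf_mem hne⟩

theorem not_extendsToPPlus_convQI (hI : IsIdeal I) (hP : ¬ ExtendsToPPlus I) (hα : StrictAnti α)
    (hlim : Tendsto α atTop (𝓝 0)) : ¬ ExtendsToPPlus (convQI I α) := by
  rintro ⟨J, hJ, hJP, hsub⟩
  obtain ⟨B, hB, hcut⟩ := hJP.exists_unsplit hJ fun p : ℚ => {q | qr q < p}
  obtain ⟨x, hx, hBx⟩ := exists_convTo_of_unsplit hcut
  refine hP ⟨pushforwardOn J B (annulusIndex α x), hJ.pushforwardOn hB fun n =>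
    hJ.of_finite (hBx.finite_inter_preimage_annulusIndex hα hlim n), hJP.pushforwardOn hJ B _,
    fun C hC => hsub (IQuick.mem_convQI ⟨x, hx, hBx.mono inter_subset_left, ?_⟩)⟩
  exact hI.mono hC (annuliHit_inter_preimage_annulusIndex_subset hα.antitone B x C)

end NonExtendability

section Katetov

section Baire

variable {Q X Y : Type*} [TopologicalSpace X] [BaireSpace X] [TopologicalSpace Y] [CompactSpace Y]
  [SecondCountableTopology Y]

open TopologicalSpace in
lemma exists_forall_nhds_closure_image_mem_nhds {g : Q → X} {U : Set X} (hU : IsOpen U)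
    (hne : U.Nonempty) (hg : U ⊆ closure (range g)) (f : Q → Y) :
    ∃ x ∈ U, ∃ y, ∀ V ∈ 𝓝 y, closure (g '' (f ⁻¹' V)) ∈ 𝓝 x := by
  obtain ⟨x, hgeneric, hxU⟩ : ∃ x, (∀ V ∈ countableBasis Y,
      x ∉ frontier (closure (g '' (f ⁻¹' V)))) ∧ x ∈ U := by
    have hres : ∀ᶠ x in residual X, ∀ V ∈ countableBasis Y,
        x ∉ frontier (closure (g '' (f ⁻¹' V))) :=
      (eventually_countable_ball (countable_countableBasis Y)).2 fun V _ =>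
        residual_of_dense_open isClosed_frontier.isOpen_compl <|
          interior_eq_empty_iff_dense_compl.1 (interior_frontier isClosed_closure)
    exact ((dense_of_mem_residual hres).inter_open_nonempty U hU hne).imp fun _ => And.symm
  refine ⟨x, hxU, ?_⟩
  by_contra! hnot
  have hx : x ∉ closure (g '' (f ⁻¹' univ)) := by
    refine isCompact_univ.induction_on (p := fun V => x ∉ closure (g '' (f ⁻¹' V))) ?_ ?_ ?_ ?_
    · simp
    · exact fun V W hVW hW hx => hW (closure_mono (image_mono (preimage_mono hVW)) hx)
    · intro V W hV hW
      rw [preimage_union, image_union, closure_union]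
      exact not_or.2 ⟨hV, hW⟩
    · intro y _
      obtain ⟨W, hW, hxW⟩ := hnot y
      obtain ⟨V, hV, hyV, hVW⟩ := (isBasis_countableBasis Y).mem_nhds_iff.1 hW
      refine ⟨V, mem_nhdsWithin_of_mem_nhds ((isBasis_countableBasis Y).mem_nhds hV hyV), ?_⟩
      refine fun hx => hgeneric V hV (isClosed_closure.frontier_eq.ge ⟨hx, fun hint => hxW ?_⟩)
      exact mem_of_superset (mem_interior_iff_mem_nhds.1 hint)
        (closure_mono (image_mono (preimage_mono hVW)))
  rw [preimage_univ, image_univ] at hx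
  exact hx (hg hxU)

end Baire

lemma exists_seq_forall_eventually_mem {X : Type*} {S : ℕ → ℕ → Set X}
    (hanti : ∀ n, Antitone fun k => S k n) (hS : ∀ k, ∀ᶠ n in atTop, (S k n).Nonempty) :
    ∃ q : ℕ → X, ∀ k, ∀ᶠ n in atTop, q n ∈ S k n := by
  classical
  have : Nonempty X := (hS 0).exists.elim fun _ => Nonempty.to_type
  have hpick : ∀ n, ∃ q, ∀ k ≤ n, (S k n).Nonempty → q ∈ S k n := fun n => by
    by_cases h₀ : (S 0 n).Nonempty
    · obtain ⟨q, hq⟩ := Nat.findGreatest_spec (P := fun k => (S k n).Nonempty) n.zero_le h₀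
      exact ⟨q, fun k hk hkn => hanti n (Nat.le_findGreatest hk hkn) hq⟩
    · exact ⟨Classical.arbitrary X, fun k _ hk => absurd (hk.mono (hanti n k.zero_le)) h₀⟩
  choose q hq using hpick
  refine ⟨q, fun k => ?_⟩
  filter_upwards [hS k, eventually_ge_atTop k] with n hn hkn using hq n k hkn hn

lemma Ioo_subset_closure_range_qr : Ioo (0 : ℝ) 1 ⊆ closure (range qr) := by
  refine fun x hx => mem_closure_iff.2 fun U hU hxU => ?_
  obtain ⟨p, hpU, hp₀, hp₁⟩ :=
    (Rat.denseRange_cast (𝕜 := ℝ)).exists_mem_open (hU.inter isOpen_Ioo) ⟨x, hxU, hx⟩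
  exact ⟨p, hpU, ⟨p, Rat.cast_nonneg.1 hp₀.le, by exact_mod_cast hp₁.le⟩, rfl⟩

lemma exists_seq_mem_annuli_tendsto {α : ℕ → ℝ} (hα : StrictAnti α)
    (hlim : Tendsto α atTop (𝓝 0)) {Y : Type*} [TopologicalSpace Y] [CompactSpace Y]
    [SecondCountableTopology Y] (f : Q01 → Y) :
    ∃ (x : ℝ) (q : ℕ → Q01) (y : Y),
      (∀ᶠ n in atTop, qr (q n) ∈ Ioo (x + α (n + 1)) (x + α n)) ∧
        Tendsto (fun n => f (q n)) atTop (𝓝 y) := by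
  obtain ⟨x, -, y, hxy⟩ := exists_forall_nhds_closure_image_mem_nhds isOpen_Ioo
    (nonempty_Ioo.2 zero_lt_one) Ioo_subset_closure_range_qr f
  obtain ⟨V, hV⟩ := (𝓝 y).exists_antitone_basis
  have hshift : Tendsto (fun n => x + α n) atTop (𝓝 x) := by simpa using hlim.const_add x
  have hshrink : Tendsto (fun n => Ioo (x + α (n + 1)) (x + α n)) atTop (𝓝 x).smallSets :=
    (hshift.comp (tendsto_add_atTop_nat 1)).Ioo hshift
  obtain ⟨q, hq⟩ := exists_seq_forall_eventually_mem
    (S := fun k n => f ⁻¹' V k ∩ qr ⁻¹' Ioo (x + α (n + 1)) (x + α n))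
    (fun n k l hkl => inter_subset_inter_left _ (preimage_mono (hV.antitone hkl)))
    fun k => by
      filter_upwards [tendsto_smallSets_iff.1 hshrink _ (hxy _ (hV.mem k))] with n hn
      have hne : (Ioo (x + α (n + 1)) (x + α n)).Nonempty :=
        nonempty_Ioo.2 (by gcongr; exact hα n.lt_succ_self)
      obtain ⟨_, hmem, q, hq, rfl⟩ := mem_closure_iff.1 (hn hne.some_mem) _ isOpen_Ioo hne.some_mem
      exact ⟨q, hq, hmem⟩
  exact ⟨x, q, y, (hq 0).mono fun n => And.right,
    hV.toHasBasis.tendsto_right_iff.2 fun k _ => (hq k).mono fun n => And.left⟩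

theorem not_katLE_convIdeal_convQI {I : Set (Set ℕ)} (hI : IsIdeal I) {α : ℕ → ℝ}
    (hα : StrictAnti α) (hlim : Tendsto α atTop (𝓝 0)) :
    ¬ KatLE convIdeal (convQI I α) := by
  rintro ⟨f, hf⟩
  obtain ⟨x, q, y, hq, hy⟩ := exists_seq_mem_annuli_tendsto hα hlim
    fun r => (⟨qr (f r), qr_mem_Icc _⟩ : Icc (0 : ℝ) 1)
  have hpos := pos_of_strictAnti_of_tendsto_zero hα hlim
  have hx : ConvTo (range q) x := by
    refine convTo_range_of_tendsto (tendsto_of_tendsto_of_tendsto_of_le_of_le'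
      tendsto_const_nhds (h := fun n => x + α n) (by simpa using hlim.const_add x) ?_ ?_)
    · exact hq.mono fun n hn => (lt_add_of_pos_right x (hpos _)).le.trans hn.1.le
    · exact hq.mono fun n hn => hn.2.le
  have hmem : range q ∈ convQI I α := by
    have himage : range (f ∘ q) ∈ convIdeal := ConvTo.mem_convIdeal y.2 <|
      convTo_range_of_tendsto ((continuous_subtype_val.tendsto y).comp hy)
    obtain ⟨F, hF, hsub⟩ := hf _ himage
    exact ⟨F, hF, (image_subset_iff.1 (range_comp f q).ge).trans hsub⟩
  have hhit : ∀ᶠ n in cofinite, n ∈ annuliHit α (range q) x := by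
    rw [Nat.cofinite_eq_atTop]
    filter_upwards [hq] with n hn
    refine ⟨q n, mem_range_self n, ?_⟩
    rw [abs_of_pos (by linarith [hn.1, hpos (n + 1)])]
    exact ⟨by linarith [hn.1], by linarith [hn.2]⟩
  exact hI.univ_notMem (hI.mem_of_finite_sdiff (hx.iQuickTo_of_mem_convQI hI hα.antitone hmem).2 <|
    (eventually_cofinite.1 hhit).subset fun n hn => hn.2)

end Katetov

section BorelComplexity

lemma isSigma0_Ico (a b : ℝ) : IsSigma0 2 (Ico a b) := by
  rw [← Ici_inter_Iio]
  exact (IsSigma0.of_compl (n := 0) isClosed_Ici.isOpen_compl).inter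
    (IsSigma0.succ (n := 0) isOpen_Iio)

lemma isSigma0_compl_Ico (a b : ℝ) : IsSigma0 2 (Ico a b)ᶜ := by
  rw [← Ici_inter_Iio, compl_inter, compl_Ici, compl_Iio]
  exact (IsSigma0.succ (n := 0) isOpen_Iio).union
    (IsSigma0.of_compl (n := 0) isClosed_Ici.isOpen_compl)

/-- The infinite convergent subsets of `[0,1] ∩ ℚ`, as a subspace of Cantor space. Infiniteness
makes the limit unique. -/
abbrev ConvSeq : Type :=
  {f : Q01 → Bool // (toSet f).Infinite ∧ ∃ x ∈ Icc (0 : ℝ) 1, ConvTo (toSet f) x}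

namespace ConvSeq

/-- The limit of an infinite convergent set. -/
noncomputable def lim (f : ConvSeq) : ℝ :=
  f.2.2.choose

lemma lim_mem_Icc (f : ConvSeq) : f.lim ∈ Icc (0 : ℝ) 1 :=
  f.2.2.choose_spec.1

lemma convTo_lim (f : ConvSeq) : ConvTo (toSet f.1) f.lim :=
  f.2.2.choose_spec.2

lemma iQuick_iff {I : Set (Set ℕ)} {α : ℕ → ℝ} (f : ConvSeq) :
    IQuick I α (toSet f.1) ↔ annuliHit α (toSet f.1) f.lim ∈ I := by
  refine ⟨fun ⟨x, _, hx, hxI⟩ => ?_, fun h => ⟨f.lim, f.lim_mem_Icc, f.convTo_lim, h⟩⟩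
  rwa [f.convTo_lim.unique hx f.2.1]

open TopologicalSpace in
lemma isSigma0_preimage_lim_of_isOpen {U : Set ℝ} (hU : IsOpen U) : IsSigma0 2 (lim ⁻¹' U) := by
  have heq : lim ⁻¹' U = ⋃ V : {V : Set ℝ // V ∈ countableBasis ℝ ∧ closure V ⊆ U},
      Subtype.val ⁻¹' {f : Q01 → Bool | (toSet f ∩ {q | qr q ∉ V.1}).Finite} := by
    ext f
    have hlim := convTo_iff_tendsto.1 f.convTo_lim
    have hfin : ∀ V : Set ℝ, (toSet f.1 ∩ {q | qr q ∉ V}).Finite ↔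
        ∀ᶠ q in cofinite ⊓ 𝓟 (toSet f.1), qr q ∈ V := fun V => by
      simp only [eventually_inf_principal, eventually_cofinite, Classical.not_imp]
      rfl
    simp only [mem_preimage, mem_iUnion, mem_ofPred_eq, hfin, Subtype.exists, exists_prop]
    refine ⟨fun hf => ?_, fun ⟨V, ⟨_, hVU⟩, hV⟩ => ?_⟩
    · obtain ⟨V, hV, hfV, hVU⟩ :=
        (isBasis_countableBasis ℝ).exists_closure_subset (hU.mem_nhds hf)
      exact ⟨V, ⟨hV, hVU⟩, hlim ((isBasis_countableBasis ℝ).mem_nhds hV hfV)⟩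
    · have := cofinite_inf_principal_neBot_iff.2 f.2.1
      exact hVU (mem_closure_of_tendsto hlim hV)
  have : Countable {V : Set ℝ // V ∈ countableBasis ℝ ∧ closure V ⊆ U} :=
    ((countable_countableBasis ℝ).mono (sep_subset _ _)).to_subtype
  rw [heq]
  exact IsSigma0.iUnion fun V =>
    (isSigma0_finite_toSet_inter _).preimage continuous_subtype_val

lemma isSigma0_preimage_lim {n : ℕ} {S : Set ℝ} (hS : IsSigma0 (n + 1) S) :
    IsSigma0 (n + 2) (lim ⁻¹' S) := by
  have := hS.preimage_of_isOpen (m := 1) fun _ => isSigma0_preimage_lim_of_isOpen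
  rwa [add_comm 1 n] at this

lemma isClopen_apply_eq (q : Q01) (b : Bool) : IsClopen {f : ConvSeq | f.1 q = b} :=
  (isClopen_discrete {b}).preimage ((continuous_apply q).comp continuous_subtype_val)

lemma isSigma0_dist_lim_mem (q : Q01) {n : ℕ} {S : Set ℝ} (hS : IsSigma0 (n + 1) S) :
    IsSigma0 (n + 2) {f : ConvSeq | |qr q - f.lim| ∈ S} :=
  isSigma0_preimage_lim (hS.preimage (g := fun x => |qr q - x|) (by fun_prop))

lemma isSigma0_mem_annuliHit (α : ℕ → ℝ) (n : ℕ) :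
    IsSigma0 3 {f : ConvSeq | n ∈ annuliHit α (toSet f.1) f.lim} := by
  have heq : {f : ConvSeq | n ∈ annuliHit α (toSet f.1) f.lim} = ⋃ q,
      {f : ConvSeq | f.1 q = true} ∩ {f | |qr q - f.lim| ∈ Ico (α (n + 1)) (α n)} := by
    ext f
    simp only [annuliHit, toSet, mem_ofPred_eq, mem_iUnion, mem_inter_iff, mem_Ico]
  rw [heq]
  exact .iUnion fun q => (IsSigma0.of_isClopen (isClopen_apply_eq q true) 2).inter
    (isSigma0_dist_lim_mem q (isSigma0_Ico _ _))

-- Only finitely many points of a convergent set are at distance at least `α (n + 2)` from its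
-- limit, so a finite set of exceptions witnesses that the `n`-th annulus is missed.
lemma isSigma0_notMem_annuliHit {α : ℕ → ℝ} (hα : StrictAnti α) (hpos : ∀ n, 0 < α n) (n : ℕ) :
    IsSigma0 3 {f : ConvSeq | n ∉ annuliHit α (toSet f.1) f.lim} := by
  have heq : {f : ConvSeq | n ∉ annuliHit α (toSet f.1) f.lim} = ⋃ F : Finset Q01,
      (⋂ q ∈ F, {f : ConvSeq | f.1 q = false} ∪
        {f | |qr q - f.lim| ∈ (Ico (α (n + 1)) (α n))ᶜ}) ∩
      (⋃ (q) (_ : q ∉ F), {f : ConvSeq | f.1 q = true} ∩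
        {f | |qr q - f.lim| ∈ Ioi (α (n + 2))})ᶜ := by
    ext f
    simp only [annuliHit, toSet, mem_ofPred_eq, mem_iUnion, mem_inter_iff, mem_iInter, mem_union,
      mem_compl_iff, mem_Ico, mem_Ioi, exists_prop, not_exists, not_and, ← Bool.not_eq_true,
      ← imp_iff_not_or, not_lt]
    refine ⟨fun h => ?_, fun ⟨F, hF, hFc⟩ q hq hle => ?_⟩
    · have hfin := f.convTo_lim (α (n + 2)) (hpos _)
      refine ⟨hfin.toFinset, fun q _ hq => h q hq, fun q hqF hq => ?_⟩
      exact le_of_not_ge fun hle => hqF (hfin.mem_toFinset.2 ⟨hq, hle⟩)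
    · by_cases hqF : q ∈ F
      · exact hF q hqF hq hle
      · exact absurd (hle.trans (hFc q hqF hq)) (hα (n + 1).lt_succ_self).not_ge
  rw [heq]
  refine .iUnion fun F => (IsSigma0.biInter_finset F fun q _ => ?_).inter
    (IsSigma0.iUnion fun q => .iUnion fun _ => ?_).compl
  · exact (IsSigma0.of_isClopen (isClopen_apply_eq q false) 2).union
      (isSigma0_dist_lim_mem q (isSigma0_compl_Ico _ _))
  · exact (IsSigma0.of_isClopen (isClopen_apply_eq q true) 1).inter
      (isSigma0_dist_lim_mem (n := 0) q isOpen_Ioi)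

lemma isSigma0_compl_annuliHit_mem {I : Set (Set ℕ)} {n : ℕ}
    (hI : IsSigma0 (n + 1) {f : ℕ → Bool | toSet f ∈ I}ᶜ) {α : ℕ → ℝ} (hα : StrictAnti α)
    (hpos : ∀ n, 0 < α n) :
    IsSigma0 (n + 3) {f : ConvSeq | annuliHit α (toSet f.1) f.lim ∈ I}ᶜ := by
  classical
  have hcode := IsSigma0.preimage_of_forall_coord (m := 2) (S := {f : ℕ → Bool | toSet f ∈ I}ᶜ)
    (g := fun (f : ConvSeq) k => decide (k ∈ annuliHit α (toSet f.1) f.lim))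
    (fun k => Bool.forall_bool.2 ⟨by simpa using isSigma0_notMem_annuliHit hα hpos k,
      by simpa using isSigma0_mem_annuliHit α k⟩) hI
  simpa only [preimage_compl, preimage_ofPred_eq, toSet_decide, add_comm 2 n] using hcode

end ConvSeq

lemma isSigma0_compl_exists_convTo :
    IsSigma0 3 {f : Q01 → Bool | ∃ x ∈ Icc (0 : ℝ) 1, ConvTo (toSet f) x}ᶜ := by
  simp only [exists_convTo_iff]
  have heq : {f : Q01 → Bool | ∀ p p' : ℚ, p < p' →
      (toSet f ∩ {q | qr q < p}).Finite ∨ (toSet f ∩ {q | p' < qr q}).Finite}ᶜ =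
      ⋃ (p : ℚ) (p' : ℚ) (_ : p < p'), ({f | (toSet f ∩ {q | qr q < p}).Finite} ∪
        {f | (toSet f ∩ {q | p' < qr q}).Finite})ᶜ := by
    ext f
    simp only [mem_compl_iff, mem_ofPred_eq, mem_iUnion, mem_union, not_forall, exists_prop]
  rw [heq]
  exact .iUnion fun p => .iUnion fun p' => .iUnion fun _ =>
    ((isSigma0_finite_toSet_inter _).union (isSigma0_finite_toSet_inter _)).compl

variable {I : Set (Set ℕ)} {α : ℕ → ℝ} {n : ℕ}

lemma isSigma0_compl_iQuick (hI : IsIdeal I) (hcoI : IsSigma0 (n + 1) {f : ℕ → Bool | toSet f ∈ I}ᶜ)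
    (hα : StrictAnti α) (hpos : ∀ n, 0 < α n) :
    IsSigma0 (n + 3) {f : Q01 → Bool | IQuick I α (toSet f)}ᶜ := by
  obtain ⟨T, hT, hTeq⟩ := (ConvSeq.isSigma0_compl_annuliHit_mem hcoI hα hpos).exists_preimage_eq
    IsInducing.subtypeVal
  have hTiff : ∀ f : ConvSeq, f.1 ∈ T ↔ ¬ IQuick I α (toSet f.1) := fun f =>
    (Set.ext_iff.1 hTeq f).trans f.iQuick_iff.not.symm
  have heq : {f : Q01 → Bool | IQuick I α (toSet f)}ᶜ =
      {f | (toSet f ∩ univ).Finite}ᶜ ∩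
        ({f | ∃ x ∈ Icc (0 : ℝ) 1, ConvTo (toSet f) x}ᶜ ∪ T) := by
    ext f
    simp only [mem_compl_iff, mem_ofPred_eq, inter_univ, mem_inter_iff, mem_union]
    by_cases hfin : (toSet f).Finite
    · exact iff_of_false (not_not.2 ⟨0, by simp, .of_finite hI hα.antitone hfin 0⟩)
        fun h => h.1 hfin
    by_cases hconv : ∃ x ∈ Icc (0 : ℝ) 1, ConvTo (toSet f) x
    · rw [and_iff_right hfin, or_iff_right (not_not.2 hconv)]
      exact (hTiff ⟨f, hfin, hconv⟩).symm
    · exact iff_of_true (fun ⟨x, hx, hfx⟩ => hconv ⟨x, hx, hfx.1⟩) ⟨hfin, Or.inl hconv⟩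
  rw [heq]
  exact ((isSigma0_finite_toSet_inter univ).compl.mono (by lia)).inter
    ((isSigma0_compl_exists_convTo.mono (by lia)).union hT)

theorem isSigma0_convQI (hI : IsIdeal I) (hcoI : IsSigma0 (n + 1) {f : ℕ → Bool | toSet f ∈ I}ᶜ)
    (hα : StrictAnti α) (hpos : ∀ n, 0 < α n) :
    IsSigma0 (n + 4) {f : Q01 → Bool | toSet f ∈ convQI I α} := by
  classical
  have heq : {f : Q01 → Bool | toSet f ∈ convQI I α} = ⋃ k : ℕ, (⋃ c : Q01,
      (fun f q => f q && decide (|qr q - qr c| < 1 / (k + 1))) ⁻¹'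
        {f : Q01 → Bool | IQuick I α (toSet f)}ᶜ)ᶜ := by
    ext f
    simp only [mem_ofPred_eq, mem_convQI_iff hI hα.antitone, mem_iUnion, mem_compl_iff,
      mem_preimage, not_exists, not_not, ← toSet_and_decide]
  rw [heq]
  refine .iUnion fun k => (IsSigma0.iUnion fun c =>
    (isSigma0_compl_iQuick hI hcoI hα hpos).preimage ?_).compl
  fun_prop

end BorelComplexity

lemma strictAnti_one_div_two_pow_succ : StrictAnti fun n : ℕ => (1 / 2 ^ (n + 1) : ℝ) :=
  strictAnti_nat_of_succ_lt fun n =>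
    one_div_lt_one_div_of_lt (by positivity) (pow_lt_pow_right₀ one_lt_two (n + 1).lt_succ_self)

lemma tendsto_one_div_two_pow_succ :
    Tendsto (fun n : ℕ => (1 / 2 ^ (n + 1) : ℝ)) atTop (𝓝 0) := by
  simpa only [one_div, inv_pow, Function.comp_def] using
    (tendsto_pow_atTop_nhds_zero_of_lt_one (by norm_num : (0 : ℝ) ≤ 1 / 2) (by norm_num)).comp
      (tendsto_add_atTop_nat 1)

theorem counterexample_to_Hrusak_question_general {I : Set (Set ℕ)} (hI : IsIdeal I) {n : ℕ}
    (hcoI : IsSigma0 (n + 1) {f : ℕ → Bool | toSet f ∈ I}ᶜ) (hP : ¬ ExtendsToPPlus I)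
    {α : ℕ → ℝ} (hα : StrictAnti α) (hlim : Tendsto α atTop (𝓝 0)) :
    IsSigma0 (n + 4) {f : Q01 → Bool | toSet f ∈ convQI I α} ∧
    ¬ ExtendsToPPlus (convQI I α) ∧ ¬ KatLE convIdeal (convQI I α) :=
  ⟨isSigma0_convQI hI hcoI hα (pos_of_strictAnti_of_tendsto_zero hα hlim),
    not_extendsToPPlus_convQI hI hP hα hlim, not_katLE_convIdeal_convQI hI hα hlim⟩

theorem counterexample_to_Hrusak_question :
    IsSigma0 6 {f : Q01 → Bool |
      toSet f ∈ convQI densityZero (fun n : ℕ => 1 / 2 ^ (n + 1))} ∧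
    ¬ (∃ J : Set (Set Q01), IsIdeal J ∧ IsPPlus J ∧
        convQI densityZero (fun n : ℕ => 1 / 2 ^ (n + 1)) ⊆ J) ∧
    ¬ KatLE convIdeal (convQI densityZero (fun n : ℕ => 1 / 2 ^ (n + 1))) :=
  counterexample_to_Hrusak_question_general isIdeal_densityZero isSigma0_compl_densityZero
    not_extendsToPPlus_densityZero strictAnti_one_div_two_pow_succ tendsto_one_div_two_pow_succ
end
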